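/- arXiv:2605.12316 — 3 statements merged into one kernel-verified Lean document; each statement's English description precedes it below -/
import Mathlib

section
/- Theorem 4.2 (information-theoretic estimation lower bound under joint KL). There exist absolute constants c, c_0 > 0 such that for every integer K ≥ 4, every n ≥ c_0·log K, every horizon H ∈ ℕ, and every G ∈ (0,1], one can construct a finite sample space S, a base class Π_0 of K probability distributions on S (single-step, history-independent models) whose pairwise log-density ratios are bounded in absolute value by G, and the induced decomposable class Π = Π_0^H of product distributions P^θ = ⊗_{h=1}^H P_{θ_h} on S^H, such that every proper selector π̂ = π̂(S_1,…,S_n) ∈ Π based on n i.i.d. trajectories S_1,…,S_n ∼ P^{π*} satisfies inf_{π̂∈Π} sup_{π*∈Π} E_{S_{1:n} ∼ (P^{π*})^{⊗n}}[ KL(P^{π*} ‖ P^{π̂}) ] ≥ c · H · G^2 · (log K) / n. -/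
/-! Assouad's method on a hypercube of base laws, so that no packing of the cube is needed.

With `m = ⌊log₂ K⌋`, a bit vector `b` of length `m` labels the law of a uniform position `j`
followed by a coin biased by `ε` towards `b j`. The divergence of two such laws is at least
`ε² / m` times the Hamming distance of the labels, while flipping one bit keeps the Bhattacharyya
coefficient at least `1 - ε² / m`. For `ε² = G² m / (16 n)` the laws of `n` trajectories whose
labels differ in one of the `H m` bits are therefore hard to distinguish, so every estimator gets a
constant fraction of the bits wrong on average. Divergence is additive over the `H` steps, so the
risk is of order `H m · ε² / m = H G² m / (16 n)`, and `m` is of order `log K`. -/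

open Finset

/-- KL divergence between two densities on a finite type. -/
noncomputable def kl {α : Type*} [Fintype α] (P Q : α → ℝ) : ℝ :=
  ∑ x, P x * Real.log (P x / Q x)

section ProductDensity

variable {ι : Type*} [Fintype ι] {S : ι → Type*}

/-- The joint density of independent coordinates with densities `P i`. -/
def prodDensity (P : ∀ i, S i → ℝ) (u : ∀ i, S i) : ℝ :=
  ∏ i, P i (u i)

lemma prodDensity_nonneg {P : ∀ i, S i → ℝ} (hP : ∀ i x, 0 ≤ P i x) (u : ∀ i, S i) :
    0 ≤ prodDensity P u :=
  prod_nonneg fun i _ => hP i (u i)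

variable [DecidableEq ι] [∀ i, Fintype (S i)]

lemma sum_prodDensity (P : ∀ i, S i → ℝ) : ∑ u, prodDensity P u = ∏ i, ∑ x, P i x :=
  (Fintype.prod_sum P).symm

lemma prodDensity_mem_stdSimplex {P : ∀ i, S i → ℝ} (hP : ∀ i, P i ∈ stdSimplex ℝ (S i)) :
    prodDensity P ∈ stdSimplex ℝ (∀ i, S i) :=
  ⟨prodDensity_nonneg fun i => (hP i).1, by
    rw [sum_prodDensity, prod_congr rfl fun i _ => (hP i).2, prod_const_one]⟩

lemma sum_prodDensity_mul_apply {P : ∀ i, S i → ℝ} (hP : ∀ i, ∑ x, P i x = 1) (i : ι)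
    (g : S i → ℝ) : ∑ u, prodDensity P u * g (u i) = ∑ x, P i x * g x := by
  have habsorb : ∀ u, prodDensity P u * g (u i) = prodDensity (P * Pi.mulSingle i g) u := by
    intro u
    have hsingle : ∏ k, (Pi.mulSingle i g : ∀ k, S k → ℝ) k (u k) = g (u i) := by
      rw [Fintype.prod_eq_single i fun k hk => by simp [hk], Pi.mulSingle_eq_same]
    simp only [prodDensity, Pi.mul_apply, prod_mul_distrib, hsingle]
  simp only [habsorb, sum_prodDensity]
  rw [Fintype.prod_eq_single i fun k hk => by simp [hk, hP]]
  simp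

lemma kl_prodDensity {P Q : ∀ i, S i → ℝ} (hP : ∀ i, ∑ x, P i x = 1)
    (hPQ : ∀ i x, Q i x = 0 → P i x = 0) :
    kl (prodDensity P) (prodDensity Q) = ∑ i, kl (P i) (Q i) := by
  have hlog : ∀ u, prodDensity P u * Real.log (prodDensity P u / prodDensity Q u) =
      ∑ i, prodDensity P u * Real.log (P i (u i) / Q i (u i)) := by
    intro u
    by_cases hu : prodDensity P u = 0
    · simp only [hu, zero_mul, sum_const_zero]
    · have hPu : ∀ i, P i (u i) ≠ 0 := fun i => prod_ne_zero_iff.mp hu i (mem_univ i)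
      rw [prodDensity, prodDensity, ← prod_div_distrib,
        Real.log_prod fun i _ => div_ne_zero (hPu i) (mt (hPQ i _) (hPu i)), mul_sum]
  simp only [kl, hlog]
  rw [sum_comm]
  exact sum_congr rfl fun i _ =>
    sum_prodDensity_mul_apply hP i fun x => Real.log (P i x / Q i x)

end ProductDensity

section Affinity

variable {α : Type*} [Fintype α]

/-- The Bhattacharyya coefficient of two densities, which measures how hard they are to tell
apart and, unlike `affinity`, is multiplicative over products. -/
noncomputable def bhattacharyya (P Q : α → ℝ) : ℝ :=
  ∑ x, √(P x * Q x)

/-- The affinity `1 - TV(P, Q)` of two densities, i.e. the least possible sum of the two error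
probabilities of a test between `P` and `Q`. -/
noncomputable def affinity (P Q : α → ℝ) : ℝ :=
  ∑ x, min (P x) (Q x)

lemma bhattacharyya_self {P : α → ℝ} (hP : P ∈ stdSimplex ℝ α) : bhattacharyya P P = 1 := by
  simp only [bhattacharyya, Real.sqrt_mul_self (hP.1 _), hP.2]

lemma bhattacharyya_sq_le_two_mul_affinity {P Q : α → ℝ} (hP : P ∈ stdSimplex ℝ α)
    (hQ : Q ∈ stdSimplex ℝ α) : bhattacharyya P Q ^ 2 ≤ 2 * affinity P Q := by
  have hmin : ∀ x, 0 ≤ min (P x) (Q x) := fun x => le_min (hP.1 x) (hQ.1 x)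
  have hmax : ∑ x, max (P x) (Q x) ≤ 2 :=
    calc ∑ x, max (P x) (Q x) ≤ ∑ x, (P x + Q x) :=
          sum_le_sum fun x _ => max_le_add_of_nonneg (hP.1 x) (hQ.1 x)
      _ = 2 := by rw [sum_add_distrib, hP.2, hQ.2, one_add_one_eq_two]
  calc bhattacharyya P Q ^ 2 ≤ (∑ x, min (P x) (Q x)) * ∑ x, max (P x) (Q x) := by
        refine sum_sq_le_sum_mul_sum_of_sq_le_mul _ (fun x _ => hmin x)
          (fun x _ => (hP.1 x).trans (le_max_left _ _)) fun x _ => ?_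
        rw [min_mul_max, Real.sq_sqrt (mul_nonneg (hP.1 x) (hQ.1 x))]
    _ ≤ affinity P Q * 2 := mul_le_mul_of_nonneg_left hmax (sum_nonneg fun x _ => hmin x)
    _ = 2 * affinity P Q := mul_comm _ _

end Affinity

section BhattacharyyaProduct

variable {ι : Type*} [Fintype ι] [DecidableEq ι] {S : ι → Type*} [∀ i, Fintype (S i)]

lemma bhattacharyya_prodDensity {P Q : ∀ i, S i → ℝ} (hPQ : ∀ i x, 0 ≤ P i x * Q i x) :
    bhattacharyya (prodDensity P) (prodDensity Q) = ∏ i, bhattacharyya (P i) (Q i) := by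
  simp only [bhattacharyya, prodDensity, ← prod_mul_distrib,
    Real.sqrt_prod _ fun i _ => hPQ i _]
  exact sum_prodDensity fun i x => √(P i x * Q i x)

lemma bhattacharyya_prodDensity_update {P : ∀ i, S i → ℝ} (hP : ∀ i, P i ∈ stdSimplex ℝ (S i))
    (i : ι) {q : S i → ℝ} (hq : ∀ x, 0 ≤ q x) :
    bhattacharyya (prodDensity P) (prodDensity (Function.update P i q)) =
      bhattacharyya (P i) q := by
  have hupdate : ∀ k x, 0 ≤ Function.update P i q k x := by
    rw [Function.forall_update_iff P (p := fun k f => ∀ x, 0 ≤ f x)]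
    exact ⟨hq, fun k _ => (hP k).1⟩
  rw [bhattacharyya_prodDensity fun k x => mul_nonneg ((hP k).1 x) (hupdate k x),
    Fintype.prod_eq_single i, Function.update_self]
  intro k hk
  rw [Function.update_of_ne hk, bhattacharyya_self (hP k)]

end BhattacharyyaProduct

section Hamming

lemma natCast_hammingDist {ι : Type*} [Fintype ι] {β : ι → Type*} [∀ i, DecidableEq (β i)]
    (v w : ∀ i, β i) : (hammingDist v w : ℝ) = ∑ i, if v i ≠ w i then 1 else 0 :=
  natCast_card_filter _ _

lemma natCast_hammingDist_eq_sum_curry {η κ β : Type*} [Fintype η] [Fintype κ] [DecidableEq β]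
    (v w : η × κ → β) : (hammingDist v w : ℝ) =
      ∑ h, (hammingDist (Function.curry v h) (Function.curry w h) : ℝ) := by
  simp only [natCast_hammingDist, Fintype.sum_prod_type]
  rfl

end Hamming

section Assouad

variable {ι Ω : Type*} [DecidableEq ι]

/-- Negation of the bit at position `i`, giving the neighbours of `v` in the hypercube. -/
def flipBit (i : ι) (v : ι → Bool) : ι → Bool :=
  Function.update v i (!v i)

lemma flipBit_involutive (i : ι) : Function.Involutive (flipBit i) := by
  intro v
  simp only [flipBit, Function.update_self, Function.update_idem, Bool.not_not,
    Function.update_eq_self]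

lemma curry_flipBit {η κ : Type*} [DecidableEq η] [DecidableEq κ] (h : η) (j : κ)
    (v : η × κ → Bool) : Function.curry (flipBit (h, j) v) =
      Function.update (Function.curry v) h (flipBit j (Function.curry v h)) :=
  Function.curry_update v (h, j) _

variable [Fintype Ω]

lemma affinity_le_error_add_error_flipBit (μ : (ι → Bool) → Ω → ℝ) (i : ι) (v : ι → Bool)
    (t : Ω → Bool) :
    affinity (μ v) (μ (flipBit i v)) ≤ (∑ x, μ v x * if v i ≠ t x then 1 else 0) +
      ∑ x, μ (flipBit i v) x * if flipBit i v i ≠ t x then 1 else 0 := by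
  rw [← sum_add_distrib]
  refine sum_le_sum fun x _ => ?_
  rw [show flipBit i v i = !v i from Function.update_self ..]
  cases v i <;> cases t x <;> simp

variable [Fintype ι]

lemma card_mul_div_two_le_sum_error {μ : (ι → Bool) → Ω → ℝ} {a : ℝ} (i : ι)
    (hμ : ∀ v, a ≤ affinity (μ v) (μ (flipBit i v))) (t : Ω → Bool) :
    Fintype.card (ι → Bool) * (a / 2) ≤ ∑ v, ∑ x, μ v x * if v i ≠ t x then 1 else 0 := by
  set err : (ι → Bool) → ℝ := fun v => ∑ x, μ v x * if v i ≠ t x then 1 else 0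
  have hflip : ∑ v, err (flipBit i v) = ∑ v, err v :=
    Equiv.sum_comp (flipBit_involutive i).toPerm err
  have hpair : ∑ _v : ι → Bool, a ≤ ∑ v, (err v + err (flipBit i v)) :=
    sum_le_sum fun v _ => (hμ v).trans (affinity_le_error_add_error_flipBit μ i v t)
  rw [sum_add_distrib, hflip, sum_const, card_univ, nsmul_eq_mul] at hpair
  linarith

theorem exists_le_sum_mul_hammingDist {μ : (ι → Bool) → Ω → ℝ} {a : ℝ}
    (hμ : ∀ i v, a ≤ affinity (μ v) (μ (flipBit i v))) (est : Ω → ι → Bool) :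
    ∃ v, Fintype.card ι * (a / 2) ≤ ∑ x, μ v x * hammingDist v (est x) := by
  have hsum : ∑ _v : ι → Bool, Fintype.card ι * (a / 2) ≤
      ∑ v, ∑ x, μ v x * hammingDist v (est x) :=
    calc ∑ _v : ι → Bool, Fintype.card ι * (a / 2)
        = ∑ _i : ι, Fintype.card (ι → Bool) * (a / 2) := by
          simp only [sum_const, card_univ, nsmul_eq_mul]
          ring
      _ ≤ ∑ i, ∑ v, ∑ x, μ v x * if v i ≠ est x i then 1 else 0 :=
          sum_le_sum fun i _ => card_mul_div_two_le_sum_error i (hμ i) fun x => est x i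
      _ = ∑ v, ∑ x, μ v x * hammingDist v (est x) := by
          rw [sum_comm]
          refine sum_congr rfl fun v _ => ?_
          rw [sum_comm]
          simp only [natCast_hammingDist, mul_sum]
  obtain ⟨v, -, hv⟩ := exists_le_of_sum_le univ_nonempty hsum
  exact ⟨v, hv⟩

end Assouad

section Risk

variable {η Θ S : Type*} [Fintype η]

/-- The density `P^θ` of one trajectory under the policy `θ` of the decomposable class. -/
def policyDensity (P : Θ → S → ℝ) (θ : η → Θ) : (η → S) → ℝ :=
  prodDensity fun h => P (θ h)

/-- The density `(P^θ)^{⊗ n}` of a data set of `n` independent trajectories. -/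
def dataDensity (P : Θ → S → ℝ) (n : ℕ) (θ : η → Θ) : (Fin n → η → S) → ℝ :=
  prodDensity fun _ => policyDensity P θ

variable [DecidableEq η] [Fintype S]

lemma policyDensity_mem_stdSimplex {P : Θ → S → ℝ} (hP : ∀ k, P k ∈ stdSimplex ℝ S)
    (θ : η → Θ) : policyDensity P θ ∈ stdSimplex ℝ (η → S) :=
  prodDensity_mem_stdSimplex fun h => hP (θ h)

lemma dataDensity_mem_stdSimplex {P : Θ → S → ℝ} (hP : ∀ k, P k ∈ stdSimplex ℝ S) (n : ℕ)
    (θ : η → Θ) : dataDensity P n θ ∈ stdSimplex ℝ (Fin n → η → S) :=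
  prodDensity_mem_stdSimplex fun _ => policyDensity_mem_stdSimplex hP θ

lemma bhattacharyya_dataDensity_update {P : Θ → S → ℝ} (hP : ∀ k, P k ∈ stdSimplex ℝ S)
    (n : ℕ) (θ : η → Θ) (h : η) (k : Θ) :
    bhattacharyya (dataDensity P n θ) (dataDensity P n (Function.update θ h k)) =
      bhattacharyya (P (θ h)) (P k) ^ n := by
  have hstep : bhattacharyya (policyDensity P θ) (policyDensity P (Function.update θ h k)) =
      bhattacharyya (P (θ h)) (P k) := by
    have hupdate : (fun h' => P (Function.update θ h k h')) =
        Function.update (fun h' => P (θ h')) h (P k) := Function.comp_update P θ h k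
    rw [policyDensity, policyDensity, hupdate]
    exact bhattacharyya_prodDensity_update (fun h' => hP (θ h')) h (hP k).1
  have hnonneg := fun θ : η → Θ => (policyDensity_mem_stdSimplex hP θ).1
  rw [dataDensity, dataDensity,
    bhattacharyya_prodDensity fun _ u => mul_nonneg (hnonneg _ u) (hnonneg _ u), prod_const,
    hstep, card_univ, Fintype.card_fin]

/-- The risk `E[KL(P^θ ‖ P^{sel(data)})]` of the proper selector `sel` when the `n` observed
trajectories are drawn from `P^θ`. -/
noncomputable def klRisk (P : Θ → S → ℝ) {n : ℕ} (sel : (Fin n → η → S) → η → Θ)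
    (θ : η → Θ) : ℝ :=
  ∑ data, dataDensity P n θ data * kl (policyDensity P θ) (policyDensity P (sel data))

lemma kl_comp_equiv {α β : Type*} [Fintype α] [Fintype β] (e : β ≃ α) (P Q : α → ℝ) :
    kl (P ∘ e) (Q ∘ e) = kl P Q :=
  e.sum_comp fun x => P x * Real.log (P x / Q x)

lemma klRisk_comp_equiv {T : Type*} [Fintype T] (e : T ≃ S) (P : Θ → S → ℝ) {n : ℕ}
    (sel : (Fin n → η → T) → η → Θ) (θ : η → Θ) :
    klRisk (fun k => P k ∘ e) sel θ =
      klRisk P (fun data => sel fun i h => e.symm (data i h)) θ := by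
  let eTraj : (η → T) ≃ (η → S) := Equiv.piCongrRight fun _ => e
  let eData : (Fin n → η → T) ≃ (Fin n → η → S) := Equiv.piCongrRight fun _ => eTraj
  have hkl : ∀ θ θ' : η → Θ,
      kl (policyDensity (fun k => P k ∘ e) θ) (policyDensity (fun k => P k ∘ e) θ') =
        kl (policyDensity P θ) (policyDensity P θ') := fun θ θ' =>
    kl_comp_equiv eTraj (policyDensity P θ) (policyDensity P θ')
  simp only [klRisk, hkl]
  refine Fintype.sum_equiv eData _ _ fun data => ?_
  have hdata : (fun i h => e.symm (eData data i h)) = data := eData.symm_apply_apply data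
  rw [hdata]
  rfl

variable {κ : Type*} [Fintype κ] [DecidableEq κ]

theorem exists_le_klRisk_of_bit_labels {Q : (κ → Bool) → S → ℝ} {α ρ : ℝ} {n : ℕ}
    (hQ : ∀ b, Q b ∈ stdSimplex ℝ S) (hac : ∀ b b' s, Q b' s = 0 → Q b s = 0) (hα : 0 ≤ α)
    (hkl : ∀ b b', α * hammingDist b b' ≤ kl (Q b) (Q b')) (hρ : 0 ≤ ρ)
    (hbc : ∀ j b, ρ ≤ bhattacharyya (Q b) (Q (flipBit j b)))
    (sel : (Fin n → η → S) → η → κ → Bool) :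
    ∃ v : η → κ → Bool,
      α * (Fintype.card η * Fintype.card κ) * ρ ^ (2 * n) / 4 ≤ klRisk Q sel v := by
  let μ : (η × κ → Bool) → (Fin n → η → S) → ℝ := fun v => dataDensity Q n (Function.curry v)
  have hμ : ∀ v, μ v ∈ stdSimplex ℝ (Fin n → η → S) := fun v => dataDensity_mem_stdSimplex hQ n _
  have haff : ∀ i v, ρ ^ (2 * n) / 2 ≤ affinity (μ v) (μ (flipBit i v)) := by
    rintro ⟨h, j⟩ v
    have hpow : ρ ^ n ≤ bhattacharyya (μ v) (μ (flipBit (h, j) v)) := by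
      simp only [μ, curry_flipBit, bhattacharyya_dataDensity_update hQ]
      exact pow_le_pow_left₀ hρ (hbc j _) n
    have hsq := pow_le_pow_left₀ (pow_nonneg hρ n) hpow 2
    rw [← pow_mul, mul_comm n 2] at hsq
    linarith [bhattacharyya_sq_le_two_mul_affinity (hμ v) (hμ (flipBit (h, j) v))]
  obtain ⟨v, hv⟩ := exists_le_sum_mul_hammingDist haff fun data => Function.uncurry (sel data)
  refine ⟨Function.curry v, ?_⟩
  calc α * (Fintype.card η * Fintype.card κ) * ρ ^ (2 * n) / 4
      = α * (Fintype.card (η × κ) * (ρ ^ (2 * n) / 2 / 2)) := by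
        rw [Fintype.card_prod, Nat.cast_mul]
        ring
    _ ≤ α * ∑ data, μ v data * hammingDist v (Function.uncurry (sel data)) :=
        mul_le_mul_of_nonneg_left hv hα
    _ = ∑ data, μ v data * (α * hammingDist v (Function.uncurry (sel data))) := by
        rw [mul_sum]
        exact sum_congr rfl fun _ _ => mul_left_comm _ _ _
    _ ≤ klRisk Q sel (Function.curry v) := by
        refine sum_le_sum fun data _ => mul_le_mul_of_nonneg_left ?_ ((hμ v).1 data)
        rw [natCast_hammingDist_eq_sum_curry, mul_sum, policyDensity, policyDensity,
          kl_prodDensity (fun h => (hQ _).2) fun h => hac _ _]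
        exact sum_le_sum fun h _ => hkl _ _

end Risk

section Mixture

variable {κ S : Type*} [Fintype κ]

/-- The density on `κ × S` of a uniform index `j` followed by a draw from `P j`. -/
noncomputable def uniformMixture (P : κ → S → ℝ) (x : κ × S) : ℝ :=
  P x.1 x.2 / Fintype.card κ

lemma bhattacharyya_uniformMixture [Fintype S] (P Q : κ → S → ℝ) :
    bhattacharyya (uniformMixture P) (uniformMixture Q) =
      (∑ j, bhattacharyya (P j) (Q j)) / Fintype.card κ := by
  have hsqrt : ∀ x, √(uniformMixture P x * uniformMixture Q x) =
      √(P x.1 x.2 * Q x.1 x.2) / Fintype.card κ := by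
    intro x
    rw [uniformMixture, uniformMixture, div_mul_div_comm, Real.sqrt_div' _ (by positivity),
      Real.sqrt_mul_self (Nat.cast_nonneg _)]
  simp only [bhattacharyya, hsqrt, Fintype.sum_prod_type, sum_div]

variable [Nonempty κ]

lemma uniformMixture_div_uniformMixture (P Q : κ → S → ℝ) (x : κ × S) :
    uniformMixture P x / uniformMixture Q x = P x.1 x.2 / Q x.1 x.2 :=
  div_div_div_cancel_right₀ (Nat.cast_ne_zero.mpr Fintype.card_ne_zero) _ _

variable [Fintype S]

lemma uniformMixture_mem_stdSimplex {P : κ → S → ℝ} (hP : ∀ j, P j ∈ stdSimplex ℝ S) :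
    uniformMixture P ∈ stdSimplex ℝ (κ × S) := by
  refine ⟨fun x => div_nonneg ((hP x.1).1 x.2) (Nat.cast_nonneg _), ?_⟩
  simp only [uniformMixture, Fintype.sum_prod_type, ← sum_div, (hP _).2, sum_const, card_univ,
    nsmul_eq_mul, mul_one]
  exact div_self (Nat.cast_ne_zero.mpr Fintype.card_ne_zero)

lemma kl_uniformMixture (P Q : κ → S → ℝ) :
    kl (uniformMixture P) (uniformMixture Q) = (∑ j, kl (P j) (Q j)) / Fintype.card κ := by
  simp only [kl, uniformMixture_div_uniformMixture, Fintype.sum_prod_type, sum_div]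
  exact sum_congr rfl fun j _ => sum_congr rfl fun s _ => div_mul_eq_mul_div _ _ _

end Mixture

section Coin

/-- The law of a bit that agrees with `b` with probability `(1 + ε) / 2`. -/
noncomputable def biasedCoin (ε : ℝ) (b s : Bool) : ℝ :=
  (1 + if b = s then ε else -ε) / 2

variable {ε : ℝ}

lemma biasedCoin_pos (hε : |ε| < 1) (b s : Bool) : 0 < biasedCoin ε b s := by
  have hε' := abs_lt.mp hε
  unfold biasedCoin
  split_ifs <;> linarith

lemma biasedCoin_mem_stdSimplex (hε : |ε| < 1) (b : Bool) :
    biasedCoin ε b ∈ stdSimplex ℝ Bool := by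
  refine ⟨fun s => (biasedCoin_pos hε b s).le, ?_⟩
  cases b <;> simp [biasedCoin] <;> ring

lemma log_biasedCoin_div_biasedCoin (ε : ℝ) (b b' s : Bool) :
    Real.log (biasedCoin ε b s / biasedCoin ε b' s) =
      if b = b' then 0 else if b = s then Real.log ((1 + ε) / (1 - ε))
        else -Real.log ((1 + ε) / (1 - ε)) := by
  rw [biasedCoin, biasedCoin, div_div_div_cancel_right₀ two_ne_zero, ← Real.log_inv, inv_div]
  cases b <;> cases b' <;> cases s <;> simp [← sub_eq_add_neg]

lemma le_log_odds (hε0 : 0 ≤ ε) (hε1 : ε < 1) : ε ≤ Real.log ((1 + ε) / (1 - ε)) := by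
  have hpos : 0 < (1 + ε) / (1 - ε) := div_pos (by linarith) (by linarith)
  refine le_trans ?_ (Real.one_sub_inv_le_log_of_pos hpos)
  rw [inv_div, le_sub_comm, div_le_iff₀ (by linarith)]
  nlinarith

lemma log_odds_le (hε0 : 0 ≤ ε) (hε1 : ε ≤ 1 / 2) : Real.log ((1 + ε) / (1 - ε)) ≤ 4 * ε := by
  have hpos : 0 < (1 + ε) / (1 - ε) := div_pos (by linarith) (by linarith)
  refine (Real.log_le_sub_one_of_pos hpos).trans ?_
  rw [sub_le_iff_le_add, div_le_iff₀ (by linarith)]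
  nlinarith

lemma sq_mul_le_kl_biasedCoin (hε0 : 0 ≤ ε) (hε1 : ε < 1) (b b' : Bool) :
    ε ^ 2 * (if b ≠ b' then 1 else 0) ≤ kl (biasedCoin ε b) (biasedCoin ε b') := by
  have hL := mul_le_mul_of_nonneg_left (le_log_odds hε0 hε1) hε0
  simp only [kl, Fintype.sum_bool, log_biasedCoin_div_biasedCoin]
  cases b <;> cases b' <;> simp [biasedCoin] <;> linarith

lemma one_sub_sq_le_bhattacharyya_biasedCoin (hε : |ε| < 1) (b : Bool) :
    1 - ε ^ 2 ≤ bhattacharyya (biasedCoin ε b) (biasedCoin ε (!b)) := by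
  have hsq : ε ^ 2 ≤ 1 := (sq_le_one_iff_abs_le_one ε).mpr hε.le
  have hmul : ∀ s, biasedCoin ε b s * biasedCoin ε (!b) s = (1 - ε ^ 2) / 2 ^ 2 := by
    intro s
    unfold biasedCoin
    cases b <;> cases s <;> simp <;> ring
  have hsqrt : 1 - ε ^ 2 ≤ √(1 - ε ^ 2) :=
    Real.le_sqrt_of_sq_le (pow_le_of_le_one (by linarith) (by linarith [sq_nonneg ε]) two_ne_zero)
  simp only [bhattacharyya, hmul, Fintype.sum_bool, Real.sqrt_div' _ (sq_nonneg (2 : ℝ)),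
    Real.sqrt_sq zero_le_two, add_halves]
  exact hsqrt

end Coin

section Hypercube

variable {κ : Type*} [Fintype κ] [Nonempty κ] {ε : ℝ}

/-- The hypercube family: `b : κ → Bool` labels the law of a uniform position `j` together with a
coin biased by `ε` towards `b j`. Mixing over positions, rather than taking a product, keeps the
log-density ratios bounded by those of a single coin. -/
noncomputable def hypercubeDensity (ε : ℝ) (b : κ → Bool) : κ × Bool → ℝ :=
  uniformMixture fun j => biasedCoin ε (b j)

lemma hypercubeDensity_pos (hε : |ε| < 1) (b : κ → Bool) (x : κ × Bool) :
    0 < hypercubeDensity ε b x :=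
  div_pos (biasedCoin_pos hε _ _) (Nat.cast_pos.mpr Fintype.card_pos)

lemma hypercubeDensity_mem_stdSimplex (hε : |ε| < 1) (b : κ → Bool) :
    hypercubeDensity ε b ∈ stdSimplex ℝ (κ × Bool) :=
  uniformMixture_mem_stdSimplex fun j => biasedCoin_mem_stdSimplex hε (b j)

lemma abs_log_hypercubeDensity_div_le (hε0 : 0 ≤ ε) (hε1 : ε ≤ 1 / 2) (b b' : κ → Bool)
    (x : κ × Bool) : |Real.log (hypercubeDensity ε b x / hypercubeDensity ε b' x)| ≤ 4 * ε := by
  have hlow := le_log_odds hε0 (by linarith)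
  have hupp := log_odds_le hε0 hε1
  rw [hypercubeDensity, hypercubeDensity, uniformMixture_div_uniformMixture,
    log_biasedCoin_div_biasedCoin, abs_le]
  split_ifs <;> constructor <;> linarith

lemma mul_hammingDist_le_kl_hypercubeDensity (hε0 : 0 ≤ ε) (hε1 : ε < 1) (b b' : κ → Bool) :
    ε ^ 2 / Fintype.card κ * hammingDist b b' ≤
      kl (hypercubeDensity ε b) (hypercubeDensity ε b') := by
  rw [hypercubeDensity, hypercubeDensity, kl_uniformMixture, natCast_hammingDist,
    div_mul_eq_mul_div, mul_sum]
  gcongr with j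
  exact sq_mul_le_kl_biasedCoin hε0 hε1 (b j) (b' j)

lemma one_sub_le_bhattacharyya_hypercubeDensity_flipBit [DecidableEq κ] (hε : |ε| < 1) (j : κ)
    (b : κ → Bool) :
    1 - ε ^ 2 / Fintype.card κ ≤
      bhattacharyya (hypercubeDensity ε b) (hypercubeDensity ε (flipBit j b)) := by
  have hcoin : ∀ k, 1 - (Pi.single j (ε ^ 2) : κ → ℝ) k ≤
      bhattacharyya (biasedCoin ε (b k)) (biasedCoin ε (flipBit j b k)) := by
    intro k
    obtain rfl | hk := eq_or_ne k j
    · rw [Pi.single_eq_same, flipBit, Function.update_self]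
      exact one_sub_sq_le_bhattacharyya_biasedCoin hε (b k)
    · rw [Pi.single_eq_of_ne hk, flipBit, Function.update_of_ne hk,
        bhattacharyya_self (biasedCoin_mem_stdSimplex hε _), sub_zero]
  have hcard : (Fintype.card κ : ℝ) ≠ 0 := Nat.cast_ne_zero.mpr Fintype.card_ne_zero
  calc 1 - ε ^ 2 / Fintype.card κ
      = (∑ k, (1 - (Pi.single j (ε ^ 2) : κ → ℝ) k)) / Fintype.card κ := by
        rw [sum_sub_distrib, Fintype.sum_pi_single', sum_const, card_univ, nsmul_eq_mul,
          mul_one, sub_div, div_self hcard]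
    _ ≤ _ := by
        rw [hypercubeDensity, hypercubeDensity, bhattacharyya_uniformMixture]
        gcongr with k
        exact hcoin k

theorem exists_le_klRisk_hypercubeDensity {η : Type*} [Fintype η] [DecidableEq η] {n : ℕ}
    (hε0 : 0 ≤ ε) (hε1 : ε < 1) (hn : 4 * n * ε ^ 2 ≤ Fintype.card κ)
    (sel : (Fin n → η → κ × Bool) → η → κ → Bool) :
    ∃ v, Fintype.card η * ε ^ 2 / 8 ≤ klRisk (hypercubeDensity ε) sel v := by
  classical
  have hε : |ε| < 1 := by rwa [abs_of_nonneg hε0]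
  have hcard : (1 : ℝ) ≤ Fintype.card κ := Nat.one_le_cast.mpr Fintype.card_pos
  set β := ε ^ 2 / Fintype.card κ with hβ
  have hβ1 : β ≤ 1 := (div_le_one (by linarith)).mpr (by nlinarith)
  have hnβ : 4 * n * β ≤ 1 := by
    rw [hβ, ← mul_div_assoc]
    exact (div_le_one (by linarith)).mpr hn
  have hpow : 1 / 2 ≤ (1 - β) ^ (2 * n) := by
    have hbernoulli := one_add_mul_le_pow (a := -β) (by linarith) (2 * n)
    rw [← sub_eq_add_neg] at hbernoulli
    push_cast at hbernoulli
    linarith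
  obtain ⟨v, hv⟩ := exists_le_klRisk_of_bit_labels (hypercubeDensity_mem_stdSimplex hε)
    (fun b b' s hs => absurd hs (hypercubeDensity_pos hε b' s).ne') (by positivity)
    (mul_hammingDist_le_kl_hypercubeDensity hε0 hε1) (sub_nonneg.mpr hβ1)
    (one_sub_le_bhattacharyya_hypercubeDensity_flipBit hε) sel
  refine ⟨v, le_trans ?_ hv⟩
  calc Fintype.card η * ε ^ 2 / 8
      = β * (Fintype.card η * Fintype.card κ) * (1 / 2) / 4 := by
        rw [hβ]
        field_simp
        ring
    _ ≤ β * (Fintype.card η * Fintype.card κ) * (1 - β) ^ (2 * n) / 4 := by gcongr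

end Hypercube

lemma natLog_two_le_two_mul_log (K : ℕ) : (Nat.log 2 K : ℝ) ≤ 2 * Real.log K := by
  have hlogb : (Nat.log 2 K : ℝ) ≤ Real.log K / Real.log 2 := Real.natLog_le_logb K 2
  have hlog2 := Real.log_two_gt_d9
  rw [le_div_iff₀ (by linarith)] at hlogb
  nlinarith [(Nat.log 2 K).cast_nonneg (α := ℝ)]

lemma log_le_two_mul_natLog_two {K : ℕ} (hK : 2 ≤ K) : Real.log K ≤ 2 * Nat.log 2 K := by
  have hlog : 1 ≤ Nat.log 2 K := Nat.log_pos one_lt_two hK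
  have hlt : K < 2 ^ (Nat.log 2 K + 1) := Nat.lt_pow_succ_log_self one_lt_two K
  calc Real.log K ≤ Real.log (2 ^ (2 * Nat.log 2 K)) :=
        Real.log_le_log (by positivity) (by
          exact_mod_cast hlt.le.trans (Nat.pow_le_pow_right two_pos (by lia)))
    _ = 2 * Nat.log 2 K * Real.log 2 := by rw [Real.log_pow]; push_cast; ring
    _ ≤ 2 * Nat.log 2 K :=
        mul_le_of_le_one_right (by positivity) (by linarith [Real.log_two_lt_d9])

theorem exists_base_class_le_klRisk {K m n : ℕ} [NeZero m] (hmK : 2 ^ m ≤ K) {ε : ℝ}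
    (hε0 : 0 ≤ ε) (hε1 : ε ≤ 1 / 2) (hn : 4 * n * ε ^ 2 ≤ m) :
    ∃ P : Fin K → Fin (m * 2) → ℝ, (∀ k, (∀ s, 0 < P k s) ∧ ∑ s, P k s = 1) ∧
      (∀ j k s, |Real.log (P j s / P k s)| ≤ 4 * ε) ∧
      ∀ (H : ℕ) (sel : (Fin n → Fin H → Fin (m * 2)) → Fin H → Fin K),
        ∃ θ, H * ε ^ 2 / 8 ≤ klRisk P sel θ := by
  have hε : |ε| < 1 := by rw [abs_of_nonneg hε0]; linarith
  -- `K` need not be a power of two: surplus labels repeat members of the hypercube family.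
  obtain ⟨bits, hbits⟩ : ∃ bits : Fin K → Fin m → Bool, Function.Surjective bits :=
    Function.exists_surjective_iff.mpr
      ⟨⟨fun _ _ => true⟩, Function.Embedding.nonempty_of_card_le (by simpa using hmK)⟩
  let e : Fin (m * 2) ≃ Fin m × Bool :=
    finProdFinEquiv.symm.trans ((Equiv.refl _).prodCongr finTwoEquiv)
  refine ⟨fun k => hypercubeDensity ε (bits k) ∘ e, fun k => ⟨fun s => ?_, ?_⟩, fun j k s => ?_,
    fun H sel => ?_⟩
  · exact hypercubeDensity_pos hε _ _
  · exact (e.sum_comp _).trans (hypercubeDensity_mem_stdSimplex hε _).2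
  · exact abs_log_hypercubeDensity_div_le hε0 hε1 _ _ _
  · obtain ⟨v, hv⟩ := exists_le_klRisk_hypercubeDensity hε0 (by linarith)
      (by rwa [Fintype.card_fin])
      fun (data : Fin n → Fin H → Fin m × Bool) h => bits (sel (fun i h => e.symm (data i h)) h)
    obtain ⟨θ, rfl⟩ : ∃ θ : Fin H → Fin K, (fun h => bits (θ h)) = v := hbits.comp_left v
    rw [Fintype.card_fin] at hv
    refine ⟨θ, hv.trans_eq ?_⟩
    rw [klRisk_comp_equiv e fun k => hypercubeDensity ε (bits k)]
    rfl

lemma exists_bias_sq_eq {m n G : ℝ} (hm : 0 ≤ m) (hn : 0 < n) (hmn : m ≤ n) (hG : 0 ≤ G) :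
    ∃ ε, 0 ≤ ε ∧ 4 * ε ≤ G ∧ ε ^ 2 = G ^ 2 * m / (16 * n) := by
  have hsqrt : √(m / n) ≤ 1 := Real.sqrt_le_one.mpr ((div_le_one hn).mpr hmn)
  refine ⟨G / 4 * √(m / n), by positivity, by nlinarith, ?_⟩
  rw [mul_pow, Real.sq_sqrt (by positivity)]
  ring

/-- Theorem 4.2 (information-theoretic estimation lower bound under joint KL).
The finite sample space is `Fin d`, the base class consists of `K` full-support
distributions on it with pairwise log-ratios bounded by `G`, the decomposable class
consists of the induced product distributions on `(Fin d)^H`, and every proper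
selector suffers expected joint-KL risk at least `c·H·G²·log K / n` against some
`π* = θ*` in the class. -/
theorem kl_estimation_lower_bound :
    ∃ c c0 : ℝ, 0 < c ∧ 0 < c0 ∧
    ∀ (K : ℕ), 4 ≤ K → ∀ (n : ℕ), c0 * Real.log K ≤ n →
    ∀ (H : ℕ), 0 < H → ∀ (G : ℝ), 0 < G → G ≤ 1 →
    ∃ (d : ℕ) (P : Fin K → Fin d → ℝ), 0 < d ∧
      (∀ k, (∀ s, 0 < P k s) ∧ ∑ s, P k s = 1) ∧
      (∀ j k s, |Real.log (P j s / P k s)| ≤ G) ∧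
      (∀ sel : (Fin n → Fin H → Fin d) → (Fin H → Fin K),
        ∃ θstar : Fin H → Fin K,
          c * H * G ^ 2 * Real.log K / n ≤
            ∑ data : Fin n → Fin H → Fin d,
              (∏ i, ∏ h, P (θstar h) (data i h)) *
                kl (fun u : Fin H → Fin d => ∏ h, P (θstar h) (u h))
                   (fun u : Fin H → Fin d => ∏ h, P (sel data h) (u h))) := by
  refine ⟨1 / 256, 2, by norm_num, by norm_num, fun K hK n hn H hH G hG0 hG1 => ?_⟩
  have hm : 0 < Nat.log 2 K := Nat.log_pos one_lt_two (by lia)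
  have hm' : NeZero (Nat.log 2 K) := ⟨hm.ne'⟩
  have hmn : (Nat.log 2 K : ℝ) ≤ n := (natLog_two_le_two_mul_log K).trans hn
  have hn0 : (0 : ℝ) < n := (Nat.cast_pos.mpr hm).trans_le hmn
  obtain ⟨ε, hε0, hεG, hεsq⟩ := exists_bias_sq_eq (Nat.cast_nonneg _) hn0 hmn hG0.le
  obtain ⟨P, hP, hratio, hrisk⟩ := exists_base_class_le_klRisk (n := n)
    (Nat.pow_log_le_self 2 (by lia : K ≠ 0)) hε0 (by linarith) (by
      rw [hεsq]
      field_simp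
      nlinarith)
  refine ⟨Nat.log 2 K * 2, P, by lia, hP, fun j k s => (hratio j k s).trans hεG, fun sel => ?_⟩
  obtain ⟨θ, hθ⟩ := hrisk H sel
  refine ⟨θ, le_trans ?_ hθ⟩
  calc 1 / 256 * H * G ^ 2 * Real.log K / n = H * G ^ 2 / (128 * n) * (Real.log K / 2) := by ring
    _ ≤ H * G ^ 2 / (128 * n) * Nat.log 2 K := by
        gcongr
        linarith [log_le_two_mul_natLog_two (by lia : 2 ≤ K)]
    _ = H * ε ^ 2 / 8 := by rw [hεsq]; ring
end

section
/- Lemma D.1 (central condition to Bernstein condition). Let X be a real-valued random variable with |X| ≤ B almost surely, and let η > 0. If E[e^{−ηX}] ≤ 1, then E[X^2] ≤ 4·(1/η + B)·E[X]. -/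
/-!
The idea is to integrate the pointwise bound `x² ≤ 4 (1/η + B) ((e^{-ηx} - 1)/η + x)`, valid for
`B ≥ 0` and `x ≤ B`: the central condition says precisely that `(e^{-ηX} - 1)/η` has nonpositive
expectation. In terms of `y = ηx`, squaring `1 - y/2 ≤ e^{-y/2}` gives `y²/4 ≤ e^{-y} - 1 + y` as
long as `y ≤ 2`, while for `y > 2` the linear part `y - 1` alone is large enough.
-/

open MeasureTheory

lemma sq_div_four_le_exp_neg_sub_one_add {y : ℝ} (hy : y ≤ 2) :
    y ^ 2 / 4 ≤ Real.exp (-y) - 1 + y := by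
  have h : (1 - y / 2) ^ 2 ≤ Real.exp (-y) := Real.one_sub_div_pow_le_exp_neg (n := 2) hy
  linarith [show (1 - y / 2) ^ 2 = 1 - y + y ^ 2 / 4 by ring]

lemma sq_le_mul_exp_neg_sub_one_add {y b : ℝ} (hb : 0 ≤ b) (hyb : y ≤ b) :
    y ^ 2 ≤ 4 * (1 + b) * (Real.exp (-y) - 1 + y) := by
  rcases le_or_gt y 2 with hy | hy
  · calc y ^ 2 = 4 * 1 * (y ^ 2 / 4) := by ring
      _ ≤ 4 * (1 + b) * (Real.exp (-y) - 1 + y) := by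
        gcongr
        · linarith
        · exact sq_div_four_le_exp_neg_sub_one_add hy
  · calc y ^ 2 ≤ 4 * (1 + y) * (y - 1) := by nlinarith
      _ ≤ 4 * (1 + b) * (Real.exp (-y) - 1 + y) := by
        have : 0 ≤ y - 1 := by linarith
        gcongr
        linarith [Real.exp_pos (-y)]

lemma sq_le_mul_exp_neg_mul_sub_one_div_add {η B x : ℝ} (hη : 0 < η) (hB : 0 ≤ B) (hx : x ≤ B) :
    x ^ 2 ≤ 4 * (1 / η + B) * ((Real.exp (-η * x) - 1) / η + x) := by
  have h : (η * x) ^ 2 ≤ 4 * (1 + η * B) * (Real.exp (-(η * x)) - 1 + η * x) :=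
    sq_le_mul_exp_neg_sub_one_add (by positivity) (by gcongr)
  calc x ^ 2 = (η * x) ^ 2 / η ^ 2 := by field_simp
    _ ≤ 4 * (1 + η * B) * (Real.exp (-(η * x)) - 1 + η * x) / η ^ 2 := by gcongr
    _ = 4 * (1 / η + B) * ((Real.exp (-η * x) - 1) / η + x) := by
      rw [← neg_mul]
      field_simp

section

variable {Ω : Type*} [MeasurableSpace Ω] {μ : Measure Ω} {X : Ω → ℝ} {B η : ℝ}

lemma integrable_of_ae_le_of_integrable_exp_neg_mul [IsFiniteMeasure μ] (hη : 0 < η)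
    (hXB : ∀ᵐ ω ∂μ, X ω ≤ B) (hexp : Integrable (fun ω ↦ Real.exp (-η * X ω)) μ) :
    Integrable X μ := by
  have hX : AEMeasurable X μ :=
    Real.aemeasurable_of_aemeasurable_exp_mul (neg_ne_zero.mpr hη.ne') hexp.aemeasurable
  have hexp_pos : Integrable (fun ω ↦ Real.exp (η * X ω)) μ :=
    ProbabilityTheory.integrable_exp_mul_of_le η B hη.le hX hXB
  simpa only [pow_one] using
    ProbabilityTheory.integrable_pow_of_integrable_exp_mul hη.ne' hexp_pos hexp 1

lemma integral_sq_le_mul_integral_exp_neg_mul_sub_div_add [IsFiniteMeasure μ] (hη : 0 < η)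
    (hB : 0 ≤ B) (hXB : ∀ᵐ ω ∂μ, X ω ≤ B)
    (hexp : Integrable (fun ω ↦ Real.exp (-η * X ω)) μ) :
    ∫ ω, X ω ^ 2 ∂μ ≤
      4 * (1 / η + B) * ((∫ ω, Real.exp (-η * X ω) ∂μ - μ.real Set.univ) / η + ∫ ω, X ω ∂μ) := by
  have hX : Integrable X μ := integrable_of_ae_le_of_integrable_exp_neg_mul hη hXB hexp
  have hexp_sub : Integrable (fun ω ↦ (Real.exp (-η * X ω) - 1) / η) μ :=
    (hexp.sub (integrable_const 1)).div_const η
  calc ∫ ω, X ω ^ 2 ∂μ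
      ≤ ∫ ω, 4 * (1 / η + B) * ((Real.exp (-η * X ω) - 1) / η + X ω) ∂μ := by
        refine integral_mono_of_nonneg (ae_of_all _ fun ω ↦ sq_nonneg (X ω))
          ((hexp_sub.add hX).const_mul _) ?_
        exact hXB.mono fun ω ↦ sq_le_mul_exp_neg_mul_sub_one_div_add hη hB
    _ = 4 * (1 / η + B) *
          ((∫ ω, Real.exp (-η * X ω) ∂μ - μ.real Set.univ) / η + ∫ ω, X ω ∂μ) := by
        rw [integral_const_mul, integral_add hexp_sub hX, integral_div,
          integral_sub hexp (integrable_const 1), integral_const, smul_eq_mul, mul_one]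

theorem central_to_bernstein_general [IsProbabilityMeasure μ] (hB : 0 ≤ B)
    (hXB : ∀ᵐ ω ∂μ, X ω ≤ B) (hη : 0 < η)
    (hexp : Integrable (fun ω ↦ Real.exp (-η * X ω)) μ)
    (hcentral : ∫ ω, Real.exp (-η * X ω) ∂μ ≤ 1) :
    ∫ ω, X ω ^ 2 ∂μ ≤ 4 * (1 / η + B) * ∫ ω, X ω ∂μ := by
  have hexp_sub : (∫ ω, Real.exp (-η * X ω) ∂μ - μ.real Set.univ) / η ≤ 0 := by
    rw [probReal_univ]
    exact div_nonpos_of_nonpos_of_nonneg (sub_nonpos.mpr hcentral) hη.le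
  refine (integral_sq_le_mul_integral_exp_neg_mul_sub_div_add hη hB hXB hexp).trans ?_
  gcongr
  linarith

end

/-- Lemma D.1 (central condition to Bernstein condition): if `|X| ≤ B` a.s. and
`E[exp(−ηX)] ≤ 1`, then `E[X²] ≤ 4(1/η + B)·E[X]`. -/
theorem central_to_bernstein {Ω : Type*} [MeasurableSpace Ω]
    (μ : Measure Ω) [IsProbabilityMeasure μ]
    (X : Ω → ℝ) (hX : Measurable X)
    (B : ℝ) (hB : 0 < B) (hbd : ∀ᵐ ω ∂μ, |X ω| ≤ B)
    (η : ℝ) (hη : 0 < η)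
    (hcentral : ∫ ω, Real.exp (-η * X ω) ∂μ ≤ 1) :
    ∫ ω, (X ω) ^ 2 ∂μ ≤ 4 * (1 / η + B) * ∫ ω, X ω ∂μ :=
  central_to_bernstein_general hB.le (hbd.mono fun _ ↦ le_of_abs_le) hη
    (ProbabilityTheory.integrable_exp_mul_of_mem_Icc hX.aemeasurable
      (hbd.mono fun _ ↦ abs_le.mp)) hcentral
end

section
/- Lemma D.3, forward direction (one-sided multiplicative Freedman bound). Let (F_t)_{t ≤ T} be a filtration and let (X_t)_{t ≤ T} be a sequence of random variables adapted to it with 0 ≤ X_t ≤ R almost surely for all t. Then for every ε ∈ (0,1) and δ ∈ (0,1), with probability at least 1 − δ: Σ_{t=1}^T X_t ≤ (1+ε) · Σ_{t=1}^T E[X_t | F_{t−1}] + (R/ε)·log(1/δ). -/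
/-!
By convexity, a variable `0 ≤ Y ≤ R` satisfies `exp (θ Y) ≤ 1 + κ Y` as soon as this holds at
`Y = R`. The right-hand side is linear in `Y`, so conditioning and `1 + y ≤ exp y` give
`E[exp (θ Y) | m] ≤ exp (κ E[Y | m])`. Hence `exp (∑_{t ≤ n} (θ X_t - κ E[X_t | ℱ_{t-1}]))` is a
supermartingale of expectation at most `1`, and Markov's inequality bounds the probability that its
logarithm exceeds `log (1 / δ)`. Taking `θ = ε / R` and `κ = c ε / R` requires `exp ε ≤ 1 + c ε`,
which for `ε ≤ 1` holds with `c = 1 + ε`.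
-/

open MeasureTheory Finset

lemma exp_mul_le_one_add_mul {θ κ R x : ℝ} (hx0 : 0 ≤ x) (hxR : x ≤ R)
    (hR : Real.exp (θ * R) ≤ 1 + κ * R) : Real.exp (θ * x) ≤ 1 + κ * x := by
  obtain rfl | hx := hx0.eq_or_lt
  · simp
  have hRpos : 0 < R := hx.trans_le hxR
  have hxR' : x / R ≤ 1 := (div_le_one hRpos).2 hxR
  have hchord : Real.exp (θ * x) ≤ (1 - x / R) + x / R * Real.exp (θ * R) := by
    have h := convexOn_exp.2 (Set.mem_univ 0) (Set.mem_univ (θ * R)) (sub_nonneg.2 hxR')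
      (by positivity) (sub_add_cancel 1 (x / R))
    have hcomb : x / R * (θ * R) = θ * x := by field_simp
    simpa [hcomb] using h
  calc Real.exp (θ * x) ≤ (1 - x / R) + x / R * Real.exp (θ * R) := hchord
    _ ≤ (1 - x / R) + x / R * (1 + κ * R) := by gcongr
    _ = 1 + κ * x := by field_simp; ring

lemma exp_le_one_add_one_add_mul_self {x : ℝ} (hx : |x| ≤ 1) :
    Real.exp x ≤ 1 + (1 + x) * x := by
  linarith [(abs_le.1 (Real.abs_exp_sub_one_sub_id_le hx)).2]

section CondExp

variable {Ω : Type*} {m m0 : MeasurableSpace Ω} {μ : Measure Ω} [IsFiniteMeasure μ]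
  {Y : Ω → ℝ}

lemma integrable_exp_of_ae_le {b : ℝ} (hY : AEMeasurable Y μ) (hb : ∀ᵐ ω ∂μ, Y ω ≤ b) :
    Integrable (fun ω ↦ Real.exp (Y ω)) μ := by
  simpa using ProbabilityTheory.integrable_exp_mul_of_le 1 b zero_le_one hY hb

lemma condExp_mem_Icc (hm : m ≤ m0) {a b : ℝ} (hY : AEMeasurable Y μ)
    (hbd : ∀ᵐ ω ∂μ, Y ω ∈ Set.Icc a b) : ∀ᵐ ω ∂μ, (μ[Y | m]) ω ∈ Set.Icc a b := by
  have hYint : Integrable Y μ := .of_mem_Icc a b hY hbd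
  have hlower : μ[fun _ ↦ a | m] ≤ᵐ[μ] μ[Y | m] :=
    condExp_mono (integrable_const a) hYint (hbd.mono fun _ h ↦ h.1)
  have hupper : μ[Y | m] ≤ᵐ[μ] μ[fun _ ↦ b | m] :=
    condExp_mono hYint (integrable_const b) (hbd.mono fun _ h ↦ h.2)
  rw [condExp_const hm] at hlower hupper
  filter_upwards [hlower, hupper] with ω ha hb using ⟨ha, hb⟩

lemma mul_sub_mul_condExp_le (hm : m ≤ m0) {R : ℝ} (θ κ : ℝ) (hY : AEMeasurable Y μ)
    (hbd : ∀ᵐ ω ∂μ, Y ω ∈ Set.Icc 0 R) :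
    ∀ᵐ ω ∂μ, θ * Y ω - κ * (μ[Y | m]) ω ≤ |θ| * R + |κ| * R := by
  filter_upwards [hbd, condExp_mem_Icc hm hY hbd] with ω hYω hEω
  calc θ * Y ω - κ * (μ[Y | m]) ω ≤ |θ| * Y ω + |κ| * (μ[Y | m]) ω := by
        linarith [mul_le_mul_of_nonneg_right (le_abs_self θ) hYω.1,
          mul_le_mul_of_nonneg_right (neg_le_abs κ) hEω.1]
    _ ≤ |θ| * R + |κ| * R := by
        gcongr
        exacts [hYω.2, hEω.2]

lemma integrable_exp_mul_sub_mul_condExp (hm : m ≤ m0) {R : ℝ} (θ κ : ℝ)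
    (hY : AEMeasurable Y μ) (hbd : ∀ᵐ ω ∂μ, Y ω ∈ Set.Icc 0 R) :
    Integrable (fun ω ↦ Real.exp (θ * Y ω - κ * (μ[Y | m]) ω)) μ :=
  integrable_exp_of_ae_le
    ((hY.const_mul θ).sub (integrable_condExp.aestronglyMeasurable.aemeasurable.const_mul κ))
    (mul_sub_mul_condExp_le hm θ κ hY hbd)

lemma condExp_exp_mul_le (hm : m ≤ m0) {θ κ R : ℝ} (hY : AEMeasurable Y μ)
    (hbd : ∀ᵐ ω ∂μ, Y ω ∈ Set.Icc 0 R) (hκ : Real.exp (θ * R) ≤ 1 + κ * R) :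
    μ[fun ω ↦ Real.exp (θ * Y ω) | m] ≤ᵐ[μ] fun ω ↦ Real.exp (κ * (μ[Y | m]) ω) := by
  have hYint : Integrable Y μ := .of_mem_Icc 0 R hY hbd
  have hone : Integrable (fun _ : Ω ↦ (1 : ℝ)) μ := integrable_const 1
  have hlinear : μ[fun ω ↦ Real.exp (θ * Y ω) | m] ≤ᵐ[μ] μ[(fun _ ↦ 1) + κ • Y | m] :=
    condExp_mono (ProbabilityTheory.integrable_exp_mul_of_mem_Icc hY hbd)
      (hone.add (hYint.smul κ))
      (hbd.mono fun _ h ↦ exp_mul_le_one_add_mul h.1 h.2 hκ)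
  filter_upwards [hlinear, condExp_add hone (hYint.smul κ) m, condExp_smul κ Y m]
    with ω hle hadd hsmul
  calc (μ[fun ω ↦ Real.exp (θ * Y ω) | m]) ω ≤ (μ[(fun _ ↦ 1) + κ • Y | m]) ω := hle
    _ = κ * (μ[Y | m]) ω + 1 := by
        simp [hadd, hsmul, condExp_const hm, add_comm]
    _ ≤ Real.exp (κ * (μ[Y | m]) ω) := Real.add_one_le_exp _

lemma condExp_exp_mul_sub_mul_condExp_le_one (hm : m ≤ m0) {θ κ R : ℝ} (hY : AEMeasurable Y μ)
    (hbd : ∀ᵐ ω ∂μ, Y ω ∈ Set.Icc 0 R) (hκ : Real.exp (θ * R) ≤ 1 + κ * R) :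
    μ[fun ω ↦ Real.exp (θ * Y ω - κ * (μ[Y | m]) ω) | m] ≤ᵐ[μ] 1 := by
  have hfactor : (fun ω ↦ Real.exp (θ * Y ω - κ * (μ[Y | m]) ω)) =
      (fun ω ↦ Real.exp (θ * Y ω)) * fun ω ↦ Real.exp (-(κ * (μ[Y | m]) ω)) := by
    ext ω
    simp [sub_eq_add_neg, Real.exp_add]
  have hmeas : StronglyMeasurable[m] fun ω ↦ Real.exp (-(κ * (μ[Y | m]) ω)) :=
    Real.continuous_exp.comp_stronglyMeasurable (stronglyMeasurable_condExp.const_mul κ).neg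
  have hpull := condExp_mul_of_stronglyMeasurable_right hmeas
    (hfactor ▸ integrable_exp_mul_sub_mul_condExp hm θ κ hY hbd)
    (ProbabilityTheory.integrable_exp_mul_of_mem_Icc hY hbd (t := θ))
  rw [hfactor]
  filter_upwards [hpull, condExp_exp_mul_le hm hY hbd hκ] with ω hprod hle
  rw [hprod, Pi.mul_apply, Pi.one_apply, Real.exp_neg, ← div_eq_mul_inv]
  exact (div_le_one (Real.exp_pos _)).2 hle

end CondExp

section Supermartingale

variable {Ω : Type*} {m0 : MeasurableSpace Ω} {μ : Measure Ω} {ℱ : Filtration ℕ m0}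

lemma supermartingale_exp_sum [IsFiniteMeasure μ] {D : ℕ → Ω → ℝ} (hD : StronglyAdapted ℱ D)
    (hint : ∀ t, Integrable (fun ω ↦ Real.exp (D t ω)) μ)
    (hsum : ∀ n, Integrable (fun ω ↦ Real.exp (∑ t ∈ Icc 1 n, D t ω)) μ)
    (hle : ∀ n, μ[fun ω ↦ Real.exp (D (n + 1) ω) | ℱ n] ≤ᵐ[μ] 1) :
    Supermartingale (fun n ω ↦ Real.exp (∑ t ∈ Icc 1 n, D t ω)) ℱ μ := by
  have hadapt : StronglyAdapted ℱ fun n ω ↦ Real.exp (∑ t ∈ Icc 1 n, D t ω) := fun n ↦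
    Real.continuous_exp.comp_stronglyMeasurable <|
      Finset.stronglyMeasurable_fun_sum _ fun t ht ↦ (hD t).mono (ℱ.mono (mem_Icc.1 ht).2)
  refine supermartingale_nat hadapt hsum fun n ↦ ?_
  have hsucc : (fun ω ↦ Real.exp (∑ t ∈ Icc 1 (n + 1), D t ω)) =
      (fun ω ↦ Real.exp (∑ t ∈ Icc 1 n, D t ω)) * fun ω ↦ Real.exp (D (n + 1) ω) := by
    ext ω
    simp [sum_Icc_succ_top, Real.exp_add]
  rw [hsucc]
  filter_upwards [condExp_mul_of_stronglyMeasurable_left (hadapt n) (hsucc ▸ hsum (n + 1))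
    (hint (n + 1)), hle n] with ω hpull hω
  rw [hpull]
  exact mul_le_of_le_one_right (Real.exp_pos _).le hω

lemma supermartingale_exp_sum_mul_sub_mul_condExp [IsFiniteMeasure μ] {X : ℕ → Ω → ℝ}
    (hX : StronglyAdapted ℱ X) {θ κ R : ℝ} (hbd : ∀ t, ∀ᵐ ω ∂μ, X t ω ∈ Set.Icc 0 R)
    (hκ : Real.exp (θ * R) ≤ 1 + κ * R) :
    Supermartingale (fun n ω ↦
      Real.exp (∑ t ∈ Icc 1 n, (θ * X t ω - κ * (μ[X t | ℱ (t - 1)]) ω))) ℱ μ := by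
  have hXm (t : ℕ) : AEMeasurable (X t) μ := ((hX t).mono (ℱ.le t)).measurable.aemeasurable
  have hD : StronglyAdapted ℱ fun t ω ↦ θ * X t ω - κ * (μ[X t | ℱ (t - 1)]) ω := fun t ↦
    ((hX t).const_mul θ).sub
      ((stronglyMeasurable_condExp.mono (ℱ.mono (Nat.sub_le t 1))).const_mul κ)
  refine supermartingale_exp_sum hD
    (fun t ↦ integrable_exp_mul_sub_mul_condExp (ℱ.le _) θ κ (hXm t) (hbd t)) (fun n ↦ ?_)
    fun n ↦ condExp_exp_mul_sub_mul_condExp_le_one (ℱ.le n) (hXm (n + 1)) (hbd (n + 1)) hκ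
  refine integrable_exp_of_ae_le (b := ∑ _t ∈ Icc 1 n, (|θ| * R + |κ| * R))
    (Finset.aemeasurable_fun_sum _ fun t _ ↦ ((hD t).mono (ℱ.le t)).measurable.aemeasurable) ?_
  filter_upwards [ae_all_iff.2 fun t ↦
    mul_sub_mul_condExp_le (ℱ.le (t - 1)) θ κ (hXm t) (hbd t)] with ω h
  exact sum_le_sum fun t _ ↦ h t

lemma integral_exp_sum_mul_sub_mul_condExp_le_one [IsProbabilityMeasure μ] {X : ℕ → Ω → ℝ}
    (hX : StronglyAdapted ℱ X) {θ κ R : ℝ} (hbd : ∀ t, ∀ᵐ ω ∂μ, X t ω ∈ Set.Icc 0 R)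
    (hκ : Real.exp (θ * R) ≤ 1 + κ * R) (n : ℕ) :
    ∫ ω, Real.exp (∑ t ∈ Icc 1 n, (θ * X t ω - κ * (μ[X t | ℱ (t - 1)]) ω)) ∂μ ≤ 1 := by
  simpa using (supermartingale_exp_sum_mul_sub_mul_condExp hX hbd hκ).setIntegral_le
    (Nat.zero_le n) MeasurableSet.univ

end Supermartingale

lemma ofReal_one_sub_le_measure_le_log_one_div {Ω : Type*} {m0 : MeasurableSpace Ω}
    {μ : Measure Ω} [IsProbabilityMeasure μ] {Z : Ω → ℝ}
    (hint : Integrable (fun ω ↦ Real.exp (Z ω)) μ) (hle : ∫ ω, Real.exp (Z ω) ∂μ ≤ 1)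
    {δ : ℝ} (hδ : 0 < δ) :
    ENNReal.ofReal (1 - δ) ≤ μ {ω | Z ω ≤ Real.log (1 / δ)} := by
  set A := {ω | Z ω ≤ Real.log (1 / δ)}
  have hsub : Aᶜ ⊆ {ω | Real.log (1 / δ) ≤ Z ω} := fun ω (hω : ¬ Z ω ≤ _) ↦ (not_le.1 hω).le
  have hchernoff : μ.real {ω | Real.log (1 / δ) ≤ Z ω} ≤ δ := by
    calc μ.real {ω | Real.log (1 / δ) ≤ Z ω}
        ≤ Real.exp (-1 * Real.log (1 / δ)) * ProbabilityTheory.mgf Z μ 1 :=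
          ProbabilityTheory.measure_ge_le_exp_mul_mgf _ zero_le_one (by simpa using hint)
      _ = δ * ∫ ω, Real.exp (Z ω) ∂μ := by
          simp [ProbabilityTheory.mgf, Real.exp_log hδ]
      _ ≤ δ := mul_le_of_le_one_right hδ.le hle
  have hcompl : μ Aᶜ ≤ ENNReal.ofReal δ := by
    rw [← ofReal_measureReal]
    exact ENNReal.ofReal_le_ofReal ((measureReal_mono hsub).trans hchernoff)
  rw [ENNReal.ofReal_sub _ hδ.le, ENNReal.ofReal_one, tsub_le_iff_right]
  calc (1 : ENNReal) = μ Set.univ := measure_univ.symm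
    _ ≤ μ A + μ Aᶜ := measure_univ_le_add_compl A
    _ ≤ μ A + ENNReal.ofReal δ := by gcongr

theorem freedman_one_sided_forward_general {Ω : Type*} {m0 : MeasurableSpace Ω}
    (μ : Measure Ω) [IsProbabilityMeasure μ]
    (ℱ : Filtration ℕ m0) (T : ℕ)
    (X : ℕ → Ω → ℝ) (hadapt : Adapted ℱ X)
    (R : ℝ) (hR : 0 < R)
    (hbd : ∀ t, ∀ᵐ ω ∂μ, 0 ≤ X t ω ∧ X t ω ≤ R)
    (ε : ℝ) (hε : 0 < ε) (c : ℝ) (hc : Real.exp ε ≤ 1 + c * ε)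
    (δ : ℝ) (hδ : 0 < δ) :
    ENNReal.ofReal (1 - δ) ≤
      μ {ω | ∑ t ∈ Finset.Icc 1 T, X t ω ≤
        c * ∑ t ∈ Finset.Icc 1 T, (μ[X t | ℱ (t - 1)]) ω + (R / ε) * Real.log (1 / δ)} := by
  have hκ : Real.exp (ε / R * R) ≤ 1 + c * ε / R * R := by
    rwa [div_mul_cancel₀ _ hR.ne', div_mul_cancel₀ _ hR.ne']
  refine (ofReal_one_sub_le_measure_le_log_one_div
    ((supermartingale_exp_sum_mul_sub_mul_condExp hadapt.stronglyAdapted hbd hκ).integrable T)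
    (integral_exp_sum_mul_sub_mul_condExp_le_one hadapt.stronglyAdapted hbd hκ T) hδ).trans
    (measure_mono fun ω hω ↦ ?_)
  set S := ∑ t ∈ Icc 1 T, X t ω
  set E := ∑ t ∈ Icc 1 T, (μ[X t | ℱ (t - 1)]) ω
  have hlog : ε / R * S - c * ε / R * E ≤ Real.log (1 / δ) := by
    simpa only [S, E, Set.mem_ofPred_eq, mul_sum, ← sum_sub_distrib] using hω
  calc S = R / ε * (ε / R * S - c * ε / R * E) + c * E := by field_simp; ring
    _ ≤ R / ε * Real.log (1 / δ) + c * E := by gcongr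
    _ = c * E + R / ε * Real.log (1 / δ) := add_comm _ _

/-- Lemma D.3, forward direction (one-sided multiplicative Freedman bound):
for an adapted sequence with `0 ≤ X_t ≤ R` a.s., with probability at least `1 − δ`,
`Σ_{t=1}^T X_t ≤ (1+ε)·Σ_{t=1}^T E[X_t | F_{t−1}] + (R/ε)·log(1/δ)`. -/
theorem freedman_one_sided_forward {Ω : Type*} {m0 : MeasurableSpace Ω}
    (μ : Measure Ω) [IsProbabilityMeasure μ]
    (ℱ : Filtration ℕ m0) (T : ℕ)
    (X : ℕ → Ω → ℝ) (hadapt : Adapted ℱ X)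
    (R : ℝ) (hR : 0 < R)
    (hbd : ∀ t, ∀ᵐ ω ∂μ, 0 ≤ X t ω ∧ X t ω ≤ R)
    (ε : ℝ) (hε0 : 0 < ε) (hε1 : ε < 1)
    (δ : ℝ) (hδ0 : 0 < δ) (hδ1 : δ < 1) :
    ENNReal.ofReal (1 - δ) ≤
      μ {ω | ∑ t ∈ Finset.Icc 1 T, X t ω ≤
        (1 + ε) * ∑ t ∈ Finset.Icc 1 T, (μ[X t | ℱ (t - 1)]) ω
          + (R / ε) * Real.log (1 / δ)} :=
  freedman_one_sided_forward_general μ ℱ T X hadapt R hR hbd ε hε0 (1 + ε)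
    (exp_le_one_add_one_add_mul_self (abs_le.2 ⟨by linarith, hε1.le⟩)) δ hδ0
end
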